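/- Let k ≥ 3, let H be a simple k-uniform hypergraph on a vertex set V of size n with maximum degree Δ, let ε = 1/(50k²), and suppose q ≥ 500·k³·Δ^{1/(k−1)}. Then the set 𝒬 of proper q-colorings is nonempty and the number of proper q-colorings of H that are ε-bad is at most n · e^{−εq} · (1 − 2/q^{k−1})^{−kΔ²} · |𝒬|. (Here kΔ² bounds |N_v| = |{f ∈ E : f ∩ e ≠ ∅ for some edge e containing v}| for every v, since v lies in at most Δ edges and every edge meets at most kΔ edges.) -/

import Mathlib

/-!
Choose a coloring `X` uniformly from `Ω`; all probabilities are written as cardinalities.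

*Local lemma.* The edge `e` is monochromatic with probability `q^{-(k-1)}`, and this event depends
only on the colors on `e`, hence is independent of the edges disjoint from `e`. As `e` meets at
most `kΔ` edges and `q^{k-1} ≥ 4kΔ`, the asymmetric local lemma with all weights equal to
`x = 2 / q^{k-1}` applies (`card_mono_inter_properColorings_le`). It gives a proper coloring, and
moreover that conditioning on properness raises the probability of an event depending only on `P`
by a factor at most `(1 - x)^{-M}`, where `M` is the number of edges meeting `P`
(`card_inter_properColorings_le`). Badness at `v` depends only on the union of the edges at `v`,
and at most `kΔ²` edges meet that union.

*Tail bound.* It remains to see that a uniform coloring is bad at `v` with probability at most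
`e^{-εq}` (`card_epsBadAt_le`). By simplicity the sets `e \ {v}`, `e ∋ v`, are pairwise disjoint,
so `y_{v,i,X}` is a sum of at most `Δ` independent indicators, each of expectation at most
`p = C(q,i) (i/q)^{k-1}`. Hence it reaches `m = ⌈(εq)^i⌉` with probability at most
`C(Δ,m) p^m ≤ (eΔp/m)^m`. The lower bound on `q` yields `eΔp/m ≤ 1/(ek)` (`mean_le_threshold`),
so each `i` contributes at most `e^{-εq}/k` (`tail_le`), and there are fewer than `k` values of
`i`. A union bound over `v` finishes the proof.
-/


open Finset

noncomputable section
open Classical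

variable {V : Type} [Fintype V] [DecidableEq V]

/-- The set of proper `q`-colorings: no edge is monochromatic. -/
def properColorings (E : Finset (Finset V)) (q : ℕ) : Finset (V → Fin q) :=
  Finset.univ.filter (fun X => ∀ e ∈ E, ∃ u ∈ e, ∃ w ∈ e, X u ≠ X w)

/-- `yCount E X v i` is the number of edges `e ∋ v` on which `X` takes exactly `i`
distinct values on `e \ {v}`. -/
def yCount (E : Finset (Finset V)) {q : ℕ} (X : V → Fin q) (v : V) (i : ℕ) : ℕ :=
  (E.filter (fun e => v ∈ e ∧ ((e.erase v).image X).card = i)).card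

/-- `X` is `ε`-bad at `v` if `y_{v,i,X} ≥ (εq)^i` for some `1 ≤ i ≤ k-2`. -/
def epsBadAt (E : Finset (Finset V)) (k : ℕ) {q : ℕ} (ε : ℝ) (X : V → Fin q) (v : V) : Prop :=
  ∃ i : ℕ, 1 ≤ i ∧ i ≤ k - 2 ∧ (ε * (q : ℝ)) ^ i ≤ (yCount E X v i : ℝ)

/-- The set `A(v,X)` of colors available at `v`: those `c` such that no edge `e ∋ v`
has `e \ {v}` entirely colored `c`. -/
def availSet (E : Finset (Finset V)) {q : ℕ} (X : V → Fin q) (v : V) : Finset (Fin q) :=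
  Finset.univ.filter (fun c => ¬ ∃ e ∈ E, v ∈ e ∧ ∀ w ∈ e.erase v, X w = c)

/-- One-step transition probability of the Glauber dynamics: choose `v` uniformly from `V`;
if `A(v,X)` is nonempty recolor `v` with a uniform color from `A(v,X)`, else stay put. -/
def stepProb (E : Finset (Finset V)) {q : ℕ} (X Z : V → Fin q) : ℝ :=
  (Fintype.card V : ℝ)⁻¹ * ∑ v : V,
    if (availSet E X v).Nonempty then
      (if (∀ u : V, u ≠ v → Z u = X u) ∧ Z v ∈ availSet E X v
        then ((availSet E X v).card : ℝ)⁻¹ else 0)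
    else (if Z = X then 1 else 0)

/-- The distribution of the Glauber dynamics after `t` steps, started from
the initial distribution `init`. -/
def glauberDist (E : Finset (Finset V)) {q : ℕ} (init : (V → Fin q) → ℝ) :
    ℕ → (V → Fin q) → ℝ
  | 0 => init
  | t + 1 => fun Z => ∑ X : V → Fin q, glauberDist E init t X * stepProb E X Z

/-- `goodRunDist E k ε X₀ t Z` is the probability that the Glauber dynamics started at `X₀`
satisfies: `X_s` is `ε`-good for all `0 ≤ s ≤ t` and `X_t = Z`. -/
def goodRunDist (E : Finset (Finset V)) (k : ℕ) {q : ℕ} (ε : ℝ) (X₀ : V → Fin q) :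
    ℕ → (V → Fin q) → ℝ
  | 0 => fun X => if X = X₀ ∧ (∀ v : V, ¬ epsBadAt E k ε X v) then 1 else 0
  | t + 1 => fun Z =>
      if (∀ v : V, ¬ epsBadAt E k ε Z v)
        then ∑ X : V → Fin q, goodRunDist E k ε X₀ t X * stepProb E X Z
        else 0

/-! ### Independence and elementary counts -/

/-- The set `A` of colorings is determined by the colors of the vertices in `P`. -/
def DependsOnlyOn {q : ℕ} (A : Finset (V → Fin q)) (P : Finset V) : Prop :=
  ∀ X Y : V → Fin q, (∀ u ∈ P, X u = Y u) → (X ∈ A ↔ Y ∈ A)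

/-- Independence, in counting form: swapping the restrictions to `P` of two colorings is an
involution of `Ω × Ω` that maps `(A ∩ B) × Ω` onto `A × B`. -/
lemma card_inter_mul_card_univ {q : ℕ} {A B : Finset (V → Fin q)} {P R : Finset V}
    (hA : DependsOnlyOn A P) (hB : DependsOnlyOn B R) (hPR : Disjoint P R) :
    (A ∩ B).card * (Finset.univ : Finset (V → Fin q)).card = A.card * B.card := by
  rw [← Finset.card_product, ← Finset.card_product]
  have hP : ∀ X Y : V → Fin q, P.piecewise X Y ∈ A ↔ X ∈ A := fun X Y =>
    hA _ _ fun u hu => by simp [hu]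
  have hR : ∀ X Y : V → Fin q, P.piecewise X Y ∈ B ↔ Y ∈ B := fun X Y =>
    hB _ _ fun u hu => by simp [Finset.disjoint_right.mp hPR hu]
  have hinv : ∀ X Y : V → Fin q,
      P.piecewise (P.piecewise X Y) (P.piecewise Y X) = X := by
    intro X Y; ext u; by_cases hu : u ∈ P <;> simp [hu]
  refine Finset.card_nbij' (fun Z => (P.piecewise Z.1 Z.2, P.piecewise Z.2 Z.1))
    (fun Z => (P.piecewise Z.1 Z.2, P.piecewise Z.2 Z.1)) ?_ ?_ ?_ ?_
  · rintro ⟨X, Y⟩ h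
    simp only [Finset.coe_product, Set.mem_prod, Finset.mem_coe, Finset.mem_inter] at h ⊢
    exact ⟨(hP _ _).2 h.1.1, (hR _ _).2 h.1.2⟩
  · rintro ⟨X, Y⟩ h
    simp only [Finset.coe_product, Set.mem_prod, Finset.mem_coe, Finset.mem_inter,
      Finset.mem_univ, and_true] at h ⊢
    exact ⟨(hP _ _).2 h.1, (hR _ _).2 h.2⟩
  · rintro ⟨X, Y⟩ -
    exact Prod.ext (hinv X Y) (hinv Y X)
  · rintro ⟨X, Y⟩ -
    exact Prod.ext (hinv X Y) (hinv Y X)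

lemma card_subset_colors (q : ℕ) (P : Finset V) (T : Finset (Fin q)) :
    (Finset.univ.filter (fun X : V → Fin q => ∀ u ∈ P, X u ∈ T)).card * q ^ P.card
      = T.card ^ P.card * q ^ Fintype.card V := by
  have h : Finset.univ.filter (fun X : V → Fin q => ∀ u ∈ P, X u ∈ T)
      = Fintype.piFinset (fun u => if u ∈ P then T else Finset.univ) := by
    ext X
    simp only [Finset.mem_filter, Finset.mem_univ, true_and, Fintype.mem_piFinset]
    refine forall_congr' fun u => ?_
    by_cases hu : u ∈ P <;> simp [hu]
  have h2 : ∀ u, (if u ∈ P then T else Finset.univ : Finset (Fin q)).card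
      = if u ∈ P then T.card else q := by
    intro u; split_ifs <;> simp
  rw [h, Fintype.card_piFinset]
  simp only [h2]
  rw [Finset.prod_ite, Finset.prod_const, Finset.prod_const, mul_assoc, ← pow_add]
  congr 2
  · congr 1; ext; simp
  · have : (Finset.univ.filter (fun u => u ∉ P)) = Pᶜ := by ext; simp
    rw [this, Finset.card_compl]
    exact Nat.sub_add_cancel (Finset.card_le_univ P)

/-- The colorings taking exactly `i` values on `P`. -/
def exactColors (q : ℕ) (P : Finset V) (i : ℕ) : Finset (V → Fin q) :=
  Finset.univ.filter (fun X => (P.image X).card = i)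

lemma exactColors_dependsOnlyOn (q : ℕ) (P : Finset V) (i : ℕ) :
    DependsOnlyOn (exactColors q P i) P := by
  intro X Y h
  have : P.image X = P.image Y := Finset.image_congr fun u hu => h u hu
  simp [exactColors, this]

/-- Union bound over the set of `i` colors used on `P`. -/
lemma card_exactColors_mul_le (q : ℕ) (P : Finset V) (i : ℕ) :
    (exactColors q P i).card * q ^ P.card
      ≤ q.choose i * i ^ P.card * q ^ Fintype.card V := by
  have hsub : exactColors q P i ⊆ (Finset.powersetCard i (Finset.univ : Finset (Fin q))).biUnion
      (fun T => Finset.univ.filter (fun X : V → Fin q => ∀ u ∈ P, X u ∈ T)) := by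
    intro X hX
    simp only [exactColors, Finset.mem_filter, Finset.mem_univ, true_and] at hX
    simp only [Finset.mem_biUnion, Finset.mem_powersetCard, Finset.mem_filter, Finset.mem_univ,
      true_and]
    exact ⟨P.image X, ⟨Finset.subset_univ _, hX⟩, fun u hu => Finset.mem_image_of_mem X hu⟩
  calc (exactColors q P i).card * q ^ P.card
      ≤ (∑ T ∈ Finset.powersetCard i (Finset.univ : Finset (Fin q)),
          (Finset.univ.filter (fun X : V → Fin q => ∀ u ∈ P, X u ∈ T)).card) * q ^ P.card :=
        Nat.mul_le_mul_right _ ((Finset.card_le_card hsub).trans Finset.card_biUnion_le)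
    _ = ∑ T ∈ Finset.powersetCard i (Finset.univ : Finset (Fin q)),
          i ^ P.card * q ^ Fintype.card V := by
        rw [Finset.sum_mul]
        refine Finset.sum_congr rfl fun T hT => ?_
        rw [card_subset_colors, (Finset.mem_powersetCard.mp hT).2]
    _ = q.choose i * i ^ P.card * q ^ Fintype.card V := by
        rw [Finset.sum_const, Finset.card_powersetCard, Finset.card_univ, Fintype.card_fin,
          smul_eq_mul, mul_assoc]

lemma card_colorings (V : Type) [Fintype V] [DecidableEq V] (q : ℕ) :
    (Finset.univ : Finset (V → Fin q)).card = q ^ Fintype.card V := by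
  simp

/-! ### The local lemma -/

/-- The colorings for which the edge `e` is monochromatic. -/
def monoColorings (q : ℕ) (e : Finset V) : Finset (V → Fin q) :=
  Finset.univ.filter (fun X => ¬ ∃ u ∈ e, ∃ w ∈ e, X u ≠ X w)

lemma monoColorings_dependsOnlyOn (q : ℕ) (e : Finset V) :
    DependsOnlyOn (monoColorings q e) e := by
  intro X Y h
  simp only [monoColorings, Finset.mem_filter, Finset.mem_univ, true_and, not_exists, not_and,
    not_not]
  constructor
  · intro H u hu w hw; rw [← h u hu, ← h w hw]; exact H u hu w hw
  · intro H u hu w hw; rw [h u hu, h w hw]; exact H u hu w hw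

lemma properColorings_dependsOnlyOn (q : ℕ) (S : Finset (Finset V)) (R : Finset V)
    (hS : ∀ e ∈ S, e ⊆ R) : DependsOnlyOn (properColorings S q) R := by
  intro X Y h
  simp only [properColorings, Finset.mem_filter, Finset.mem_univ, true_and]
  refine forall₂_congr fun e he => ?_
  constructor
  · rintro ⟨u, hu, w, hw, H⟩
    exact ⟨u, hu, w, hw, by rwa [← h u (hS e he hu), ← h w (hS e he hw)]⟩
  · rintro ⟨u, hu, w, hw, H⟩
    exact ⟨u, hu, w, hw, by rwa [h u (hS e he hu), h w (hS e he hw)]⟩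

lemma card_monoColorings_le {k q : ℕ} (hk : 1 ≤ k) (hq : 0 < q) {e : Finset V}
    (he : e.card = k) :
    ((monoColorings q e).card : ℝ) * (q : ℝ) ^ (k - 1) ≤ (q : ℝ) ^ Fintype.card V := by
  have hsub : monoColorings q e ⊆ exactColors q e 1 := by
    intro X hX
    simp only [monoColorings, Finset.mem_filter, Finset.mem_univ, true_and, not_exists, not_and,
      not_not] at hX
    simp only [exactColors, Finset.mem_filter, Finset.mem_univ, true_and]
    obtain ⟨u, hu⟩ : e.Nonempty := Finset.card_pos.mp (by omega)
    rw [Finset.card_eq_one]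
    refine ⟨X u, ?_⟩
    ext c
    simp only [Finset.mem_image, Finset.mem_singleton]
    constructor
    · rintro ⟨w, hw, rfl⟩; exact hX w hw u hu
    · rintro rfl; exact ⟨u, hu, rfl⟩
  have h := card_exactColors_mul_le q e 1
  rw [he, Nat.choose_one_right, one_pow, mul_one] at h
  have h2 : q * ((monoColorings q e).card * q ^ (k - 1)) ≤ q * q ^ Fintype.card V := by
    calc q * ((monoColorings q e).card * q ^ (k - 1))
        = (monoColorings q e).card * q ^ (k - 1 + 1) := by rw [pow_succ]; ring
      _ = (monoColorings q e).card * q ^ k := by rw [Nat.sub_add_cancel hk]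
      _ ≤ (exactColors q e 1).card * q ^ k := Nat.mul_le_mul_right _ (Finset.card_le_card hsub)
      _ ≤ _ := h
  exact_mod_cast Nat.le_of_mul_le_mul_left h2 hq

lemma card_properColorings_insert (q : ℕ) (S : Finset (Finset V)) (e : Finset V) :
    (properColorings (insert e S) q).card + (monoColorings q e ∩ properColorings S q).card
      = (properColorings S q).card := by
  rw [← Finset.card_union_of_disjoint]
  · congr 1
    ext X
    simp only [properColorings, monoColorings, Finset.mem_union, Finset.mem_inter,
      Finset.mem_filter, Finset.mem_univ, true_and, Finset.forall_mem_insert]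
    rw [← or_and_right, and_iff_right (Classical.em _)]
  · rw [Finset.disjoint_left]
    intro X h1 h2
    simp only [properColorings, monoColorings, Finset.mem_inter,
      Finset.mem_filter, Finset.mem_univ, true_and, Finset.forall_mem_insert] at h1 h2
    exact h2.1 h1.1

lemma properColorings_anti (q : ℕ) {S T : Finset (Finset V)} (h : S ⊆ T) :
    properColorings T q ⊆ properColorings S q := by
  intro X hX
  simp only [properColorings, Finset.mem_filter, Finset.mem_univ, true_and] at hX ⊢
  exact fun e he => hX e (h he)

/-- Chain rule: if every edge `e` outside a set `T` of fewer than `N` edges is monochromatic with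
conditional probability at most `x` given that `T` is properly colored, then properly coloring
the further edges `S₁` costs a factor at least `(1 - x) ^ |S₁|`. -/
lemma pow_mul_card_properColorings_le {q : ℕ} {E : Finset (Finset V)} {x : ℝ} (hx1 : x ≤ 1)
    {N : ℕ}
    (H : ∀ T ⊆ E, T.card < N → ∀ e ∈ E, e ∉ T →
      ((monoColorings q e ∩ properColorings T q).card : ℝ) ≤ x * (properColorings T q).card)
    (S₁ S₂ : Finset (Finset V)) (h1 : S₁ ⊆ E) (h2 : S₂ ⊆ E) (hd : Disjoint S₁ S₂)
    (hN : S₁.card + S₂.card ≤ N) :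
    (1 - x) ^ S₁.card * (properColorings S₂ q).card ≤ (properColorings (S₁ ∪ S₂) q).card := by
  induction S₁ using Finset.induction_on with
  | empty => simp
  | insert e S he ih =>
    rw [Finset.card_insert_of_notMem he] at hN ⊢
    rw [Finset.insert_subset_iff] at h1
    rw [Finset.disjoint_insert_left] at hd
    have ih' := ih h1.2 hd.2 (by omega)
    have hT := H (S ∪ S₂) (Finset.union_subset h1.2 h2)
      (by have := Finset.card_union_le S S₂; omega) e h1.1 (by simp [he, hd.1])
    have hi : ((properColorings (insert e (S ∪ S₂)) q).card : ℝ)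
        + (monoColorings q e ∩ properColorings (S ∪ S₂) q).card
        = (properColorings (S ∪ S₂) q).card := by
      exact_mod_cast card_properColorings_insert q (S ∪ S₂) e
    rw [Finset.insert_union, pow_succ]
    have := mul_le_mul_of_nonneg_left ih' (sub_nonneg.mpr hx1)
    nlinarith

/-- Given that the edges of `S` are properly colored, an event depending only on `P` becomes more
likely by a factor at most `(1 - x) ^ (-M)`, where `M` bounds the number of edges of `S`
meeting `P`. -/
lemma card_inter_properColorings_le {q : ℕ} {E : Finset (Finset V)} {x : ℝ} (hx0 : 0 ≤ x)
    (hx1 : x ≤ 1) {N : ℕ}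
    (H : ∀ T ⊆ E, T.card < N → ∀ e ∈ E, e ∉ T →
      ((monoColorings q e ∩ properColorings T q).card : ℝ) ≤ x * (properColorings T q).card)
    {S : Finset (Finset V)} (hS : S ⊆ E) (hSN : S.card ≤ N)
    {A : Finset (V → Fin q)} {P : Finset V} (hA : DependsOnlyOn A P) {M : ℕ}
    (hM : (S.filter (fun f => ¬ Disjoint f P)).card ≤ M) :
    (1 - x) ^ M * (((A ∩ properColorings S q).card : ℝ) * (q : ℝ) ^ Fintype.card V)
      ≤ A.card * (properColorings S q).card := by
  set S₁ := S.filter (fun f => ¬ Disjoint f P) with hS₁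
  set S₂ := S.filter (fun f => Disjoint f P) with hS₂
  have hd : Disjoint S₁ S₂ := by
    rw [Finset.disjoint_left]
    intro f h1 h2
    exact (Finset.mem_filter.mp h1).2 (Finset.mem_filter.mp h2).2
  have hun : S₁ ∪ S₂ = S := by
    ext f; simp only [hS₁, hS₂, Finset.mem_union, Finset.mem_filter]; tauto
  have hcard : S₁.card + S₂.card = S.card := by
    rw [← Finset.card_union_of_disjoint hd, hun]
  have hgrow := pow_mul_card_properColorings_le hx1 H S₁ S₂
    ((Finset.filter_subset _ _).trans hS) ((Finset.filter_subset _ _).trans hS) hd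
    (by omega)
  rw [hun] at hgrow
  have hind : ((A ∩ properColorings S₂ q).card : ℝ) * (q : ℝ) ^ Fintype.card V
      = A.card * (properColorings S₂ q).card := by
    have h := card_inter_mul_card_univ hA
      (properColorings_dependsOnlyOn q S₂ Pᶜ (fun e he => by
        rw [Finset.subset_compl_iff_disjoint_right]
        exact (Finset.mem_filter.mp he).2)) disjoint_compl_right
    rw [card_colorings] at h
    exact_mod_cast h
  have hle : ((A ∩ properColorings S q).card : ℝ) ≤ (A ∩ properColorings S₂ q).card := by
    exact_mod_cast Finset.card_le_card
      (Finset.inter_subset_inter_left (properColorings_anti q (Finset.filter_subset _ _)))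
  have h1x : 0 ≤ 1 - x := sub_nonneg.mpr hx1
  calc (1 - x) ^ M * (((A ∩ properColorings S q).card : ℝ) * (q : ℝ) ^ Fintype.card V)
      ≤ (1 - x) ^ S₁.card *
          (((A ∩ properColorings S₂ q).card : ℝ) * (q : ℝ) ^ Fintype.card V) := by
        refine mul_le_mul (pow_le_pow_of_le_one h1x (by linarith) hM) ?_ (by positivity)
          (by positivity)
        exact mul_le_mul_of_nonneg_right hle (by positivity)
    _ = A.card * ((1 - x) ^ S₁.card * (properColorings S₂ q).card) := by rw [hind]; ring
    _ ≤ _ := mul_le_mul_of_nonneg_left hgrow (by positivity)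

lemma card_edges_meeting_le {Δ : ℕ} {E : Finset (Finset V)}
    (hdeg : ∀ u : V, (E.filter (fun e => u ∈ e)).card ≤ Δ) {S : Finset (Finset V)} (hS : S ⊆ E)
    (P : Finset V) : (S.filter (fun f => ¬ Disjoint f P)).card ≤ P.card * Δ := by
  have hsub : S.filter (fun f => ¬ Disjoint f P)
      ⊆ P.biUnion (fun u => E.filter (fun e => u ∈ e)) := by
    intro f hf
    rw [Finset.mem_filter, Finset.not_disjoint_iff] at hf
    obtain ⟨hf, u, huf, huP⟩ := hf
    simp only [Finset.mem_biUnion, Finset.mem_filter]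
    exact ⟨u, huP, hS hf, huf⟩
  exact (Finset.card_le_card hsub).trans (Finset.card_biUnion_le_card_mul _ _ _ fun u _ => hdeg u)

/-- The local lemma: in the conditional space where the edges of `T` are properly colored, any
other edge is monochromatic with probability at most twice its unconditional probability. -/
lemma card_mono_inter_properColorings_le {k Δ q : ℕ} (hk : 1 ≤ k) (hq : 0 < q)
    {E : Finset (Finset V)} (hunif : ∀ e ∈ E, e.card = k)
    (hdeg : ∀ u : V, (E.filter (fun e => u ∈ e)).card ≤ Δ)
    (hbig : 4 * ((k * Δ : ℕ) : ℝ) ≤ (q : ℝ) ^ (k - 1)) (hbig2 : 4 ≤ (q : ℝ) ^ (k - 1)) (N : ℕ) :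
    ∀ T ⊆ E, T.card < N → ∀ e ∈ E, e ∉ T →
      ((monoColorings q e ∩ properColorings T q).card : ℝ)
        ≤ 2 / (q : ℝ) ^ (k - 1) * (properColorings T q).card := by
  induction N with
  | zero => intro T _ h; omega
  | succ N ih =>
    intro T hT hTN e he heT
    have hQ : (0 : ℝ) < (q : ℝ) ^ (k - 1) := by positivity
    have hn : (0 : ℝ) < (q : ℝ) ^ Fintype.card V := by positivity
    set x : ℝ := 2 / (q : ℝ) ^ (k - 1) with hx
    have hx0 : 0 ≤ x := by positivity
    have hx1 : x ≤ 1 / 2 := by rw [hx, div_le_iff₀ hQ]; linarith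
    have hM : (T.filter (fun f => ¬ Disjoint f e)).card ≤ k * Δ := by
      have := card_edges_meeting_le hdeg hT e
      rwa [hunif e he] at this
    have h := card_inter_properColorings_le hx0 (by linarith) ih hT (by omega)
      (monoColorings_dependsOnlyOn q e) hM
    have hm := card_monoColorings_le hk hq (hunif e he)
    -- Bernoulli's inequality
    have hhalf : (1 : ℝ) / 2 ≤ (1 - x) ^ (k * Δ) := by
      have hb := one_add_mul_le_pow (a := -x) (by linarith) (k * Δ)
      have : ((k * Δ : ℕ) : ℝ) * x ≤ 1 / 2 := by
        rw [hx, ← mul_div_assoc, div_le_iff₀ hQ]; linarith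
      rw [← sub_eq_add_neg] at hb
      linarith
    set a : ℝ := ((monoColorings q e ∩ properColorings T q).card : ℝ)
    set b : ℝ := ((properColorings T q).card : ℝ)
    set c : ℝ := ((monoColorings q e).card : ℝ)
    have hb0 : 0 ≤ b := Nat.cast_nonneg _
    have ha0 : 0 ≤ a := Nat.cast_nonneg _
    have h3 : 1 / 2 * (a * (q : ℝ) ^ Fintype.card V) ≤ c * b :=
      (mul_le_mul_of_nonneg_right hhalf (by positivity)).trans h
    rw [hx, div_mul_eq_mul_div, le_div_iff₀ hQ]
    refine le_of_mul_le_mul_right ?_ hn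
    calc a * (q : ℝ) ^ (k - 1) * (q : ℝ) ^ Fintype.card V
        = 2 * (1 / 2 * (a * (q : ℝ) ^ Fintype.card V)) * (q : ℝ) ^ (k - 1) := by ring
      _ ≤ 2 * (c * b) * (q : ℝ) ^ (k - 1) := by gcongr
      _ = 2 * b * (c * (q : ℝ) ^ (k - 1)) := by ring
      _ ≤ 2 * b * (q : ℝ) ^ Fintype.card V := by gcongr

/-! ### The tail of `y_{v,i,X}` for a uniform coloring -/

/-- The events that the disjoint sets `e \ {v}`, `e ∈ S`, receive exactly `i` colors are
independent. -/
lemma card_all_exactColors_le {k q : ℕ} (hq : 0 < q) {v : V} {i : ℕ} (S : Finset (Finset V))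
    (hunif : ∀ e ∈ S, e.card = k) (hv : ∀ e ∈ S, v ∈ e)
    (hsimple : ∀ e ∈ S, ∀ f ∈ S, e ≠ f → (e ∩ f).card ≤ 1) :
    ((Finset.univ.filter (fun X : V → Fin q => ∀ e ∈ S, ((e.erase v).image X).card = i)).card : ℝ)
      ≤ ((q.choose i : ℝ) * (i : ℝ) ^ (k - 1) / (q : ℝ) ^ (k - 1)) ^ S.card
        * (q : ℝ) ^ Fintype.card V := by
  induction S using Finset.induction_on with
  | empty => simp
  | insert e S he ih =>
    have ih' := ih (fun f hf => hunif f (Finset.mem_insert_of_mem hf))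
      (fun f hf => hv f (Finset.mem_insert_of_mem hf))
      (fun f hf g hg => hsimple f (Finset.mem_insert_of_mem hf) g (Finset.mem_insert_of_mem hg))
    set B := Finset.univ.filter (fun X : V → Fin q => ∀ e ∈ S, ((e.erase v).image X).card = i)
      with hB
    have hQ : (0 : ℝ) < (q : ℝ) ^ (k - 1) := by positivity
    have hn : (0 : ℝ) < (q : ℝ) ^ Fintype.card V := by positivity
    have hset : Finset.univ.filter
        (fun X : V → Fin q => ∀ f ∈ insert e S, ((f.erase v).image X).card = i)
        = exactColors q (e.erase v) i ∩ B := by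
      ext X
      simp [exactColors, hB]
    have hdep : DependsOnlyOn B (e.erase v)ᶜ := by
      intro X Y h
      simp only [hB, Finset.mem_filter, Finset.mem_univ, true_and]
      refine forall₂_congr fun f hf => ?_
      have : (f.erase v).image X = (f.erase v).image Y := by
        refine Finset.image_congr fun u hu => h u ?_
        have hu' := Finset.mem_erase.mp (Finset.mem_coe.mp hu)
        rw [Finset.mem_compl, Finset.mem_erase, not_and]
        intro _ hue
        have hef : e ≠ f := fun h => he (h ▸ hf)
        have h1 := hsimple e (Finset.mem_insert_self _ _) f (Finset.mem_insert_of_mem hf) hef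
        exact hu'.1 (Finset.card_le_one.mp h1 u (Finset.mem_inter.mpr ⟨hue, hu'.2⟩) v
          (Finset.mem_inter.mpr ⟨hv e (Finset.mem_insert_self _ _),
            hv f (Finset.mem_insert_of_mem hf)⟩))
      rw [this]
    have hind := card_inter_mul_card_univ (exactColors_dependsOnlyOn q (e.erase v) i) hdep
      disjoint_compl_right
    rw [card_colorings] at hind
    have hex := card_exactColors_mul_le q (e.erase v) i
    rw [Finset.card_erase_of_mem (hv e (Finset.mem_insert_self _ _)),
      hunif e (Finset.mem_insert_self _ _)] at hex
    rw [hset, Finset.card_insert_of_notMem he]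
    have hind' : ((exactColors q (e.erase v) i ∩ B).card : ℝ) * (q : ℝ) ^ Fintype.card V
        = (exactColors q (e.erase v) i).card * B.card := by exact_mod_cast hind
    have hex' : ((exactColors q (e.erase v) i).card : ℝ)
        ≤ (q.choose i : ℝ) * (i : ℝ) ^ (k - 1) / (q : ℝ) ^ (k - 1)
          * (q : ℝ) ^ Fintype.card V := by
      rw [div_mul_eq_mul_div, le_div_iff₀ hQ]
      exact_mod_cast hex
    refine le_of_mul_le_mul_right ?_ hn
    rw [hind', pow_succ]
    calc ((exactColors q (e.erase v) i).card : ℝ) * B.card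
        ≤ _ := mul_le_mul hex' ih' (by positivity) (by positivity)
      _ = _ := by ring

/-- Union bound over the sets of `m` edges at `v` on which exactly `i` colors appear. -/
lemma card_yCount_ge_le {k Δ q : ℕ} (hq : 0 < q) {E : Finset (Finset V)}
    (hunif : ∀ e ∈ E, e.card = k)
    (hsimple : ∀ e ∈ E, ∀ f ∈ E, e ≠ f → (e ∩ f).card ≤ 1)
    (hdeg : ∀ u : V, (E.filter (fun e => u ∈ e)).card ≤ Δ) (v : V) (i m : ℕ) :
    ((Finset.univ.filter (fun X : V → Fin q => m ≤ yCount E X v i)).card : ℝ)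
      ≤ (Δ.choose m : ℝ) * ((q.choose i : ℝ) * (i : ℝ) ^ (k - 1) / (q : ℝ) ^ (k - 1)) ^ m
        * (q : ℝ) ^ Fintype.card V := by
  set F := E.filter (fun e => v ∈ e) with hF
  set p : ℝ := (q.choose i : ℝ) * (i : ℝ) ^ (k - 1) / (q : ℝ) ^ (k - 1) with hp
  have hp0 : 0 ≤ p := by positivity
  have hsub : Finset.univ.filter (fun X : V → Fin q => m ≤ yCount E X v i)
      ⊆ (Finset.powersetCard m F).biUnion (fun S =>
        Finset.univ.filter (fun X : V → Fin q => ∀ e ∈ S, ((e.erase v).image X).card = i)) := by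
    intro X hX
    have hX' : m ≤ yCount E X v i := (Finset.mem_filter.mp hX).2
    obtain ⟨S, hS, hSm⟩ := Finset.exists_subset_card_eq hX'
    simp only [Finset.mem_biUnion, Finset.mem_powersetCard, Finset.mem_filter, Finset.mem_univ,
      true_and]
    refine ⟨S, ⟨fun e he => ?_, hSm⟩, fun e he => ?_⟩
    · have := Finset.mem_filter.mp (hS he)
      exact Finset.mem_filter.mpr ⟨this.1, this.2.1⟩
    · exact (Finset.mem_filter.mp (hS he)).2.2
  calc ((Finset.univ.filter (fun X : V → Fin q => m ≤ yCount E X v i)).card : ℝ)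
      ≤ ∑ S ∈ Finset.powersetCard m F, ((Finset.univ.filter
          (fun X : V → Fin q => ∀ e ∈ S, ((e.erase v).image X).card = i)).card : ℝ) := by
        exact_mod_cast (Finset.card_le_card hsub).trans Finset.card_biUnion_le
    _ ≤ ∑ S ∈ Finset.powersetCard m F, p ^ m * (q : ℝ) ^ Fintype.card V := by
        refine Finset.sum_le_sum fun S hS => ?_
        rw [Finset.mem_powersetCard] at hS
        have hSE : ∀ e ∈ S, e ∈ E ∧ v ∈ e := fun e he => Finset.mem_filter.mp (hS.1 he)
        have := card_all_exactColors_le (k := k) hq (v := v) (i := i) S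
          (fun e he => hunif e (hSE e he).1) (fun e he => (hSE e he).2)
          (fun e he f hf => hsimple e (hSE e he).1 f (hSE f hf).1)
        rwa [hS.2] at this
    _ = (F.card.choose m : ℝ) * p ^ m * (q : ℝ) ^ Fintype.card V := by
        rw [Finset.sum_const, Finset.card_powersetCard, nsmul_eq_mul, mul_assoc]
    _ ≤ _ := by
        gcongr
        exact hdeg v

/-! ### Numerical estimates -/

lemma pow_self_le_exp_mul_factorial (m : ℕ) :
    (m : ℝ) ^ m ≤ Real.exp 1 ^ m * (m.factorial : ℝ) := by
  have h := Real.pow_div_factorial_le_exp (m : ℝ) (Nat.cast_nonneg m) m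
  rw [div_le_iff₀ (by positivity)] at h
  rwa [← Real.exp_nat_mul, mul_one]

/-- `C(n, m) ≤ (e n / m) ^ m`, without the division. -/
lemma choose_mul_pow_self_le (n m : ℕ) :
    (n.choose m : ℝ) * (m : ℝ) ^ m ≤ (Real.exp 1 * n) ^ m := by
  have h := Nat.choose_le_pow_div (α := ℝ) m n
  rw [le_div_iff₀ (by positivity)] at h
  calc (n.choose m : ℝ) * (m : ℝ) ^ m
      ≤ (n.choose m : ℝ) * (Real.exp 1 ^ m * (m.factorial : ℝ)) := by
        gcongr; exact pow_self_le_exp_mul_factorial m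
    _ = Real.exp 1 ^ m * ((n.choose m : ℝ) * (m.factorial : ℝ)) := by ring
    _ ≤ Real.exp 1 ^ m * (n : ℝ) ^ m := by gcongr
    _ = _ := by rw [mul_pow]

/-- The expected value of `y_{v,i,X}`, at most `Δ p` with `p = C(q, i) (i / q) ^ (k - 1)`, is
smaller than the threshold `(εq) ^ i` by a factor at least `e² k`. -/
lemma mean_le_threshold {k Δ q i : ℕ} (hi1 : 1 ≤ i) (hi2 : i ≤ k - 2) (hk : 3 ≤ k) (hq : 0 < q)
    (hΔq : (Δ : ℝ) * (500 * (k : ℝ) ^ 3) ^ (k - 1) ≤ (q : ℝ) ^ (k - 1)) :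
    Real.exp 1 * Δ * ((q.choose i : ℝ) * (i : ℝ) ^ (k - 1) / (q : ℝ) ^ (k - 1))
        * (Real.exp 1 * k)
      ≤ (1 / (50 * (k : ℝ) ^ 2) * (q : ℝ)) ^ i := by
  obtain ⟨j, hj⟩ : ∃ j, k - 1 = i + (j + 1) := ⟨k - 2 - i, by omega⟩
  have hik : i ≤ k := by omega
  have hk1 : (1 : ℝ) ≤ k := by exact_mod_cast (by omega : 1 ≤ k)
  have hk0 : (0 : ℝ) < k := by linarith
  have hq0 : (0 : ℝ) < q := by exact_mod_cast hq
  have he : Real.exp 1 ≤ 3 := by linarith [Real.exp_one_lt_d9]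
  have he0 : 0 < Real.exp 1 := Real.exp_pos 1
  rw [hj] at hΔq ⊢
  have hD : (0 : ℝ) < (500 * (k : ℝ) ^ 3) ^ (i + (j + 1)) := by positivity
  have hQ : (0 : ℝ) < (q : ℝ) ^ (i + (j + 1)) := by positivity
  have h1 : (q.choose i : ℝ) * (i : ℝ) ^ (i + (j + 1)) ≤ (3 * q) ^ i * (k : ℝ) ^ (j + 1) := by
    rw [pow_add, ← mul_assoc]
    refine mul_le_mul ((choose_mul_pow_self_le q i).trans ?_) ?_ (by positivity) (by positivity)
    · gcongr
    · gcongr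
  have h2 : (Δ : ℝ) / (q : ℝ) ^ (i + (j + 1)) ≤ 1 / (500 * (k : ℝ) ^ 3) ^ (i + (j + 1)) := by
    rw [div_le_div_iff₀ hQ hD, one_mul]; exact hΔq
  have h3 : 9 * (k : ℝ) * (3 ^ i * (k : ℝ) ^ (j + 1)) * (50 * (k : ℝ) ^ 2) ^ i
      ≤ (500 * (k : ℝ) ^ 3) ^ (i + (j + 1)) := by
    have ha : (3 * (50 * (k : ℝ) ^ 2)) ^ i ≤ (500 * (k : ℝ) ^ 3) ^ i := by
      refine pow_le_pow_left₀ (by positivity) ?_ i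
      nlinarith [sq_nonneg (k : ℝ), mul_nonneg (sq_nonneg (k : ℝ)) (sub_nonneg.mpr hk1)]
    have hb : 9 * (k : ℝ) * (k : ℝ) ^ (j + 1) ≤ (500 * (k : ℝ) ^ 3) ^ (j + 1) := by
      have h5 : (500 * (k : ℝ) ^ 3) ^ (j + 1)
          = (500 * (k : ℝ) ^ 2) ^ (j + 1) * (k : ℝ) ^ (j + 1) := by
        rw [← mul_pow]; ring
      rw [h5]
      gcongr
      have h6 : 500 * (k : ℝ) ^ 2 ≤ (500 * (k : ℝ) ^ 2) ^ (j + 1) :=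
        le_self_pow₀ (by nlinarith) (by omega)
      nlinarith
    calc 9 * (k : ℝ) * (3 ^ i * (k : ℝ) ^ (j + 1)) * (50 * (k : ℝ) ^ 2) ^ i
        = (3 * (50 * (k : ℝ) ^ 2)) ^ i * (9 * (k : ℝ) * (k : ℝ) ^ (j + 1)) := by
          rw [mul_pow 3]; ring
      _ ≤ (500 * (k : ℝ) ^ 3) ^ i * (500 * (k : ℝ) ^ 3) ^ (j + 1) :=
          mul_le_mul ha hb (by positivity) (by positivity)
      _ = _ := (pow_add _ _ _).symm
  calc Real.exp 1 * Δ
        * ((q.choose i : ℝ) * (i : ℝ) ^ (i + (j + 1)) / (q : ℝ) ^ (i + (j + 1)))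
        * (Real.exp 1 * k)
      = (Real.exp 1 * Real.exp 1 * k) * ((q.choose i : ℝ) * (i : ℝ) ^ (i + (j + 1)))
        * (Δ / (q : ℝ) ^ (i + (j + 1))) := by ring
    _ ≤ (3 * 3 * k) * ((3 * q) ^ i * (k : ℝ) ^ (j + 1))
        * (1 / (500 * (k : ℝ) ^ 3) ^ (i + (j + 1))) := by gcongr
    _ = (9 * (k : ℝ) * (3 ^ i * (k : ℝ) ^ (j + 1)) * (q : ℝ) ^ i)
          / (500 * (k : ℝ) ^ 3) ^ (i + (j + 1)) := by rw [mul_pow]; ring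
    _ ≤ (1 / (50 * (k : ℝ) ^ 2) * (q : ℝ)) ^ i := by
        rw [div_le_iff₀ hD, mul_pow, one_div, inv_pow]
        have h50 : (0 : ℝ) < (50 * (k : ℝ) ^ 2) ^ i := by positivity
        have hqi : (0 : ℝ) < (q : ℝ) ^ i := by positivity
        rw [inv_mul_eq_div, div_mul_eq_mul_div, le_div_iff₀ h50]
        nlinarith [mul_le_mul_of_nonneg_left h3 hqi.le]

lemma tail_le {k Δ q i m : ℕ} (hi1 : 1 ≤ i) (hi2 : i ≤ k - 2) (hk : 3 ≤ k) (hq : 0 < q)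
    (hΔq : (Δ : ℝ) * (500 * (k : ℝ) ^ 3) ^ (k - 1) ≤ (q : ℝ) ^ (k - 1))
    (hε : 1 ≤ 1 / (50 * (k : ℝ) ^ 2) * (q : ℝ))
    (hm : (1 / (50 * (k : ℝ) ^ 2) * (q : ℝ)) ^ i ≤ m) :
    (Δ.choose m : ℝ) * ((q.choose i : ℝ) * (i : ℝ) ^ (k - 1) / (q : ℝ) ^ (k - 1)) ^ m
      ≤ Real.exp (-(1 / (50 * (k : ℝ) ^ 2) * (q : ℝ))) / k := by
  have hmean := (mean_le_threshold hi1 hi2 hk hq hΔq).trans hm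
  set p : ℝ := (q.choose i : ℝ) * (i : ℝ) ^ (k - 1) / (q : ℝ) ^ (k - 1) with hp
  set y : ℝ := 1 / (50 * (k : ℝ) ^ 2) * (q : ℝ) with hy
  have hp0 : 0 ≤ p := by positivity
  have hk1 : (1 : ℝ) ≤ k := by exact_mod_cast (by omega : 1 ≤ k)
  have hk0 : (0 : ℝ) < k := by linarith
  have hym : y ≤ m := (le_self_pow₀ hε (by omega)).trans hm
  have hm1 : 1 ≤ m := by exact_mod_cast hε.trans hym
  have hm0 : (0 : ℝ) < (m : ℝ) ^ m := by
    have : (0 : ℝ) < m := by exact_mod_cast hm1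
    positivity
  have hek : (0 : ℝ) < Real.exp 1 * k := by positivity
  have h1 : (Δ.choose m : ℝ) * p ^ m * (Real.exp 1 * k) ^ m ≤ 1 := by
    refine le_of_mul_le_mul_right ?_ hm0
    calc (Δ.choose m : ℝ) * p ^ m * (Real.exp 1 * k) ^ m * (m : ℝ) ^ m
        = ((Δ.choose m : ℝ) * (m : ℝ) ^ m) * (p ^ m * (Real.exp 1 * k) ^ m) := by ring
      _ ≤ (Real.exp 1 * Δ) ^ m * (p ^ m * (Real.exp 1 * k) ^ m) := by
          gcongr; exact choose_mul_pow_self_le Δ m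
      _ = (Real.exp 1 * Δ * p * (Real.exp 1 * k)) ^ m := by
          simp only [mul_pow]; ring
      _ ≤ (m : ℝ) ^ m := by gcongr
      _ = 1 * (m : ℝ) ^ m := (one_mul _).symm
  have h2 : Real.exp y * k ≤ (Real.exp 1 * k) ^ m := by
    rw [mul_pow, ← Real.exp_nat_mul, mul_one]
    gcongr
    exact le_self_pow₀ hk1 (by omega)
  rw [Real.exp_neg, inv_eq_one_div, div_div, le_div_iff₀ (by positivity)]
  exact (mul_le_mul_of_nonneg_left h2 (by positivity)).trans h1

/-! ### Bad colorings -/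

lemma card_epsBadAt_le {k Δ q : ℕ} (hk : 3 ≤ k) (hq : 0 < q) {E : Finset (Finset V)}
    (hunif : ∀ e ∈ E, e.card = k)
    (hsimple : ∀ e ∈ E, ∀ f ∈ E, e ≠ f → (e ∩ f).card ≤ 1)
    (hdeg : ∀ u : V, (E.filter (fun e => u ∈ e)).card ≤ Δ)
    (hΔq : (Δ : ℝ) * (500 * (k : ℝ) ^ 3) ^ (k - 1) ≤ (q : ℝ) ^ (k - 1))
    (hε : 1 ≤ 1 / (50 * (k : ℝ) ^ 2) * (q : ℝ)) (v : V) :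
    ((Finset.univ.filter
        (fun X : V → Fin q => epsBadAt E k (1 / (50 * (k : ℝ) ^ 2)) X v)).card : ℝ)
      ≤ Real.exp (-(1 / (50 * (k : ℝ) ^ 2) * (q : ℝ))) * (q : ℝ) ^ Fintype.card V := by
  set y : ℝ := 1 / (50 * (k : ℝ) ^ 2) * (q : ℝ) with hy
  have hk0 : (0 : ℝ) < k := by exact_mod_cast (by omega : 0 < k)
  have hsub : Finset.univ.filter
        (fun X : V → Fin q => epsBadAt E k (1 / (50 * (k : ℝ) ^ 2)) X v)
      ⊆ (Finset.Icc 1 (k - 2)).biUnion (fun i => Finset.univ.filter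
          (fun X : V → Fin q => ⌈y ^ i⌉₊ ≤ yCount E X v i)) := by
    intro X hX
    obtain ⟨i, h1, h2, h3⟩ := (Finset.mem_filter.mp hX).2
    simp only [Finset.mem_biUnion, Finset.mem_Icc, Finset.mem_filter, Finset.mem_univ, true_and]
    exact ⟨i, ⟨h1, h2⟩, Nat.ceil_le.mpr h3⟩
  calc _ ≤ ∑ i ∈ Finset.Icc 1 (k - 2), ((Finset.univ.filter
          (fun X : V → Fin q => ⌈y ^ i⌉₊ ≤ yCount E X v i)).card : ℝ) := by
        exact_mod_cast (Finset.card_le_card hsub).trans Finset.card_biUnion_le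
    _ ≤ ∑ i ∈ Finset.Icc 1 (k - 2), Real.exp (-y) / k * (q : ℝ) ^ Fintype.card V := by
        refine Finset.sum_le_sum fun i hi => ?_
        rw [Finset.mem_Icc] at hi
        refine (card_yCount_ge_le hq hunif hsimple hdeg v i _).trans ?_
        gcongr
        exact tail_le hi.1 hi.2 hk hq hΔq hε (Nat.le_ceil _)
    _ = ((k - 2 : ℕ) : ℝ) * (Real.exp (-y) / k * (q : ℝ) ^ Fintype.card V) := by
        rw [Finset.sum_const, Nat.card_Icc, nsmul_eq_mul, Nat.add_sub_cancel]
    _ ≤ (k : ℝ) * (Real.exp (-y) / k * (q : ℝ) ^ Fintype.card V) := by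
        gcongr; omega
    _ = _ := by field_simp

lemma epsBadAt_dependsOnlyOn (E : Finset (Finset V)) (k q : ℕ) (ε : ℝ) (v : V) :
    DependsOnlyOn (Finset.univ.filter (fun X : V → Fin q => epsBadAt E k ε X v))
      ((E.filter (fun e => v ∈ e)).biUnion id) := by
  intro X Y h
  have hy : ∀ i, yCount E X v i = yCount E Y v i := by
    intro i
    unfold yCount
    congr 1
    refine Finset.filter_congr fun e he => and_congr_right fun hve => ?_
    have : (e.erase v).image X = (e.erase v).image Y := by
      refine Finset.image_congr fun u hu => h u ?_
      rw [Finset.mem_biUnion]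
      exact ⟨e, Finset.mem_filter.mpr ⟨he, hve⟩, Finset.mem_of_mem_erase (Finset.mem_coe.mp hu)⟩
    rw [this]
  rw [Finset.mem_filter, Finset.mem_filter]
  simp only [Finset.mem_univ, true_and, epsBadAt, hy]

/-- The hypothesis on `q`, raised to the power `k - 1`. -/
lemma degree_mul_pow_le {k Δ q : ℕ} (hk : 3 ≤ k)
    (hq : 500 * (k : ℝ) ^ 3 * (Δ : ℝ) ^ ((1 : ℝ) / ((k : ℝ) - 1)) ≤ (q : ℝ)) :
    (Δ : ℝ) * (500 * (k : ℝ) ^ 3) ^ (k - 1) ≤ (q : ℝ) ^ (k - 1) := by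
  have h := pow_le_pow_left₀ (by positivity) hq (k - 1)
  have hcast : ((k : ℝ) - 1) = ((k - 1 : ℕ) : ℝ) := by
    rw [Nat.cast_sub (by omega), Nat.cast_one]
  rw [mul_pow, hcast, one_div, Real.rpow_inv_natCast_pow (Nat.cast_nonneg _) (by omega)] at h
  linarith

/-- Under `q ≥ 500 k³ Δ^{1/(k-1)}` the set `𝒬` of proper colorings is nonempty, and the number
of proper colorings that are `ε`-bad (with `ε = 1/(50k²)`) is at most
`n e^{-εq} (1 - 2/q^{k-1})^{-kΔ²} |𝒬|`. -/
theorem bad_proper_colorings_count {V : Type} [Fintype V] [DecidableEq V]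
    (k Δ q : ℕ) (hk : 3 ≤ k) (hΔ : 1 ≤ Δ) (E : Finset (Finset V))
    (hunif : ∀ e ∈ E, e.card = k)
    (hsimple : ∀ e ∈ E, ∀ f ∈ E, e ≠ f → (e ∩ f).card ≤ 1)
    (hdeg : ∀ u : V, (E.filter (fun e => u ∈ e)).card ≤ Δ)
    (hq : 500 * (k : ℝ) ^ 3 * (Δ : ℝ) ^ ((1 : ℝ) / ((k : ℝ) - 1)) ≤ (q : ℝ)) :
    (properColorings E q).Nonempty ∧
    (((properColorings E q).filter
          (fun X => ∃ v : V, epsBadAt E k (1 / (50 * (k : ℝ) ^ 2)) X v)).card : ℝ) ≤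
      (Fintype.card V : ℝ) * Real.exp (-((1 / (50 * (k : ℝ) ^ 2)) * (q : ℝ))) *
        ((1 - 2 / (q : ℝ) ^ (k - 1)) ^ (k * Δ ^ 2))⁻¹ *
        ((properColorings E q).card : ℝ) := by
  have hk1 : (1 : ℝ) ≤ k := by exact_mod_cast (by omega : 1 ≤ k)
  have hk0 : (0 : ℝ) < k := by linarith
  have hΔ1 : (1 : ℝ) ≤ Δ := by exact_mod_cast hΔ
  have hΔq := degree_mul_pow_le hk hq
  have hq500 : 500 * (k : ℝ) ^ 3 ≤ q := by
    refine le_trans (le_mul_of_one_le_right (by positivity) ?_) hq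
    exact Real.one_le_rpow hΔ1 (one_div_nonneg.mpr (by linarith))
  have hk2 : (1 : ℝ) ≤ (k : ℝ) ^ 2 := one_le_pow₀ hk1
  have hk3 : (k : ℝ) ^ 2 ≤ (k : ℝ) ^ 3 := pow_le_pow_right₀ hk1 (by norm_num)
  have hkk2 : (k : ℝ) ≤ (k : ℝ) ^ 2 := le_self_pow₀ hk1 (by norm_num)
  have hq0R : (0 : ℝ) < q := by linarith
  have hq0 : 0 < q := by exact_mod_cast hq0R
  have hε : 1 ≤ 1 / (50 * (k : ℝ) ^ 2) * (q : ℝ) := by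
    rw [one_div_mul_eq_div, le_div_iff₀ (by positivity)]
    linarith
  have hQ : (0 : ℝ) < (q : ℝ) ^ (k - 1) := by positivity
  have hbig : 4 * ((k * Δ : ℕ) : ℝ) ≤ (q : ℝ) ^ (k - 1) := by
    have h1 : 500 * (k : ℝ) ^ 3 ≤ (500 * (k : ℝ) ^ 3) ^ (k - 1) :=
      le_self_pow₀ (by linarith) (by omega)
    have h2 : 4 * (k : ℝ) ≤ (500 * (k : ℝ) ^ 3) ^ (k - 1) := by linarith
    push_cast
    nlinarith [mul_le_mul_of_nonneg_left h2 (by linarith : (0 : ℝ) ≤ Δ)]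
  have hbig2 : 4 ≤ (q : ℝ) ^ (k - 1) := by
    refine le_trans ?_ hbig
    push_cast
    nlinarith
  set x : ℝ := 2 / (q : ℝ) ^ (k - 1) with hx
  have hx0 : 0 ≤ x := by positivity
  have hx1 : x ≤ 1 / 2 := by rw [hx, div_le_iff₀ hQ]; linarith
  have hlll := card_mono_inter_properColorings_le (by omega) hq0 hunif hdeg hbig hbig2 E.card
  rw [← hx] at hlll
  constructor
  · have h := pow_mul_card_properColorings_le (by linarith) hlll E ∅ subset_rfl
      (Finset.empty_subset _) (Finset.disjoint_empty_right _) (by simp)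
    rw [Finset.union_empty] at h
    have h0 : (properColorings (∅ : Finset (Finset V)) q) = Finset.univ := by
      simp [properColorings]
    rw [h0, card_colorings] at h
    have hpos : (0 : ℝ) < (1 - x) ^ E.card * ((q ^ Fintype.card V : ℕ) : ℝ) := by
      have : 0 < 1 - x := by linarith
      positivity
    exact Finset.card_pos.mp (by exact_mod_cast hpos.trans_le h)
  · set y : ℝ := 1 / (50 * (k : ℝ) ^ 2) * (q : ℝ) with hy
    have hpow : 0 < (1 - x) ^ (k * Δ ^ 2) := pow_pos (by linarith) _
    have hn : (0 : ℝ) < (q : ℝ) ^ Fintype.card V := by positivity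
    have hone : ∀ v : V, ((Finset.univ.filter
          (fun X : V → Fin q => epsBadAt E k (1 / (50 * (k : ℝ) ^ 2)) X v)
            ∩ properColorings E q).card : ℝ)
        ≤ Real.exp (-y) * ((1 - x) ^ (k * Δ ^ 2))⁻¹ * (properColorings E q).card := by
      intro v
      have hM : (E.filter (fun f => ¬ Disjoint f
          ((E.filter (fun e => v ∈ e)).biUnion id))).card ≤ k * Δ ^ 2 := by
        refine (card_edges_meeting_le hdeg subset_rfl _).trans ?_
        have h1 : ((E.filter (fun e => v ∈ e)).biUnion id).card ≤ Δ * k :=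
          (Finset.card_biUnion_le_card_mul _ _ k fun e he =>
            (hunif e (Finset.mem_filter.mp he).1).le).trans (Nat.mul_le_mul_right _ (hdeg v))
        calc _ ≤ Δ * k * Δ := Nat.mul_le_mul_right _ h1
          _ = k * Δ ^ 2 := by ring
      have h := card_inter_properColorings_le hx0 (by linarith) hlll subset_rfl le_rfl
        (epsBadAt_dependsOnlyOn E k q (1 / (50 * (k : ℝ) ^ 2)) v) hM
      have hbad := card_epsBadAt_le hk hq0 hunif hsimple hdeg hΔq hε v
      have h2 := h.trans (mul_le_mul_of_nonneg_right hbad (Nat.cast_nonneg _))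
      rw [mul_right_comm, ← div_eq_mul_inv, le_div_iff₀ hpow]
      refine le_of_mul_le_mul_right ?_ hn
      linarith
    have hsub : (properColorings E q).filter
          (fun X => ∃ v : V, epsBadAt E k (1 / (50 * (k : ℝ) ^ 2)) X v)
        ⊆ Finset.univ.biUnion (fun v : V => Finset.univ.filter
          (fun X : V → Fin q => epsBadAt E k (1 / (50 * (k : ℝ) ^ 2)) X v)
            ∩ properColorings E q) := by
      intro X hX
      obtain ⟨hX, v, hv⟩ := Finset.mem_filter.mp hX
      exact Finset.mem_biUnion.mpr ⟨v, Finset.mem_univ v,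
        Finset.mem_inter.mpr ⟨Finset.mem_filter.mpr ⟨Finset.mem_univ X, hv⟩, hX⟩⟩
    calc _ ≤ ∑ v : V, ((Finset.univ.filter
          (fun X : V → Fin q => epsBadAt E k (1 / (50 * (k : ℝ) ^ 2)) X v)
            ∩ properColorings E q).card : ℝ) := by
          exact_mod_cast (Finset.card_le_card hsub).trans Finset.card_biUnion_le
      _ ≤ ∑ _v : V, Real.exp (-y) * ((1 - x) ^ (k * Δ ^ 2))⁻¹ * (properColorings E q).card :=
          Finset.sum_le_sum fun v _ => hone v
      _ = _ := by
          rw [Finset.sum_const, Finset.card_univ, nsmul_eq_mul]; ring
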